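/- Let f satisfy the stated assumptions and let 0 < α < 1/2, α < β < 1. Define δ₁ := min{1/16, (4/M²)ω(1/32), (4/M²)ω((√(2(1−α)) − 1)/2), (4/M²)ω((1/2)(1/√(1−β) − 1))}, δ₂ := max{15/16, 1/√(2(1−α))}, δ₃ := 1/√(1−β); then 0 < δ₁ < δ₂ < 1 < δ₃. Let x ∈ ℝ^d with C := f(x) − f(x_*), let g := ∇f(x), let d ∈ ℝ^d be a BFGS search direction d = −B⁻¹g for some symmetric positive definite matrix B, and let ρ := (−gᵀd)/(dᵀ∇²f(x_*)d). If C ≤ δ₁ and δ₂ ≤ ρ ≤ δ₃, then the unit step size η = 1 satisfies both Armijo–Wolfe conditions: f(x + d) ≤ f(x) + αgᵀd and ∇f(x + d)ᵀd ≥ βgᵀd. -/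

import Mathlib

/-!
The norm `‖v‖ = √(vᵀ ∇²f(x_*) v)` controls everything. Write `e = x - x_*`, `r = ‖e‖`,
`D = ‖dvec‖`, so that `-gᵀd = ρ D²`.

* Strong self-concordance with `z = x_*` gives `∇²f(x_*) ⪯ (1 + M‖y - x_*‖) ∇²f(y)`, and the reverse
  comparison `∇²f(y) ⪯ (1 + M‖y - x_*‖) ∇²f(x_*)`. Since `(1 + s/2)² ≥ 1 + s`, integrating the first
  one twice along the segment from `x_*` yields `f(y) - f(x_*) ≥ (4/M²) ω(M‖y - x_*‖/2)`. As `ω` is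
  increasing, every `y` with `f(y) - f(x_*) ≤ δ₁` has `M‖y - x_*‖` at most
  `1/16`, `√(2(1-α)) - 1` and `1/√(1-β) - 1`.
* Integrating the Hessian from `x_*` to `x` gives `ρ D² = -gᵀd ≤ (17/16) r D`, whence `M D ≤ 17/240`.
  On the segment `[x, x + d]` the Hessian is therefore at most `(257/240)(17/16)` times `∇²f(x_*)`;
  as `ρ ≥ 15/16`, a second-order expansion shows that `f` does not exceed `f(x)` on that segment.
* So the whole segment lies in the sublevel set `f - f(x_*) ≤ δ₁`, where the sharp Hessian bounds
  hold. Integrating them twice gives the Armijo condition, integrating them once gives the Wolfe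
  condition.
-/

open Matrix Real Finset

noncomputable section

/-- `ω(x) = x − log(1+x)`. -/
def omegaFn (x : ℝ) : ℝ := x - Real.log (1 + x)

/-- `Ψ(A) = Tr(A) − d − log det A`. -/
def Psi (d : ℕ) (A : Matrix (Fin d) (Fin d) ℝ) : ℝ :=
  A.trace - (d : ℝ) - Real.log A.det

/-- Loewner order: `A ⪯ B` iff `B − A` is positive semidefinite. -/
def loewnerLE {d : ℕ} (A B : Matrix (Fin d) (Fin d) ℝ) : Prop := (B - A).PosSemidef

/-- The BFGS Hessian-approximation update
`B⁺ = B − (B s sᵀ B)/(sᵀ B s) + (y yᵀ)/(sᵀ y)`. -/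
def bfgsUpdate {d : ℕ} (B : Matrix (Fin d) (Fin d) ℝ) (s y : Fin d → ℝ) :
    Matrix (Fin d) (Fin d) ℝ :=
  B - (s ⬝ᵥ (B *ᵥ s))⁻¹ • vecMulVec (B *ᵥ s) (Bᵀ *ᵥ s) + (s ⬝ᵥ y)⁻¹ • vecMulVec y y

/-- `M`-strong self-concordance of a Hessian field:
`∇²f(x) − ∇²f(y) ⪯ M‖x−y‖_z ∇²f(y)` for all `x, y, z`. -/
def StronglySelfConcordant {d : ℕ} (hess : (Fin d → ℝ) → Matrix (Fin d) (Fin d) ℝ)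
    (M : ℝ) : Prop :=
  ∀ x y z : Fin d → ℝ,
    loewnerLE (hess x - hess y)
      ((M * Real.sqrt ((x - y) ⬝ᵥ (hess z *ᵥ (x - y)))) • hess y)


theorem omegaFn_pos {a : ℝ} (ha : 0 < a) : 0 < omegaFn a := by
  unfold omegaFn
  have := Real.log_lt_sub_one_of_pos (x := 1 + a) (by linarith) (by linarith)
  linarith

theorem le_of_omegaFn_le {a b : ℝ} (hb : 0 ≤ b) (h : omegaFn a ≤ omegaFn b) : a ≤ b := by
  by_contra! hab
  have h1 : 0 < 1 + b := by linarith
  have h2 : 0 < 1 + a := by linarith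
  have h3 := Real.log_lt_sub_one_of_pos (x := (1 + a) / (1 + b)) (by positivity)
    (by rw [Ne, div_eq_one_iff_eq h1.ne']; linarith)
  rw [Real.log_div h2.ne' h1.ne'] at h3
  have h4 : (1 + a) / (1 + b) - 1 ≤ a - b := by
    rw [div_sub_one h1.ne', div_le_iff₀ h1]
    nlinarith
  unfold omegaFn at h
  linarith

theorem le_of_hasDerivAt_nonneg {u u' : ℝ → ℝ} {T : ℝ} (hT : 0 ≤ T)
    (h : ∀ t, 0 ≤ t → t ≤ T → HasDerivAt u (u' t) t)
    (h0 : ∀ t, 0 ≤ t → t ≤ T → 0 ≤ u' t) : u 0 ≤ u T := by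
  have hm : MonotoneOn u (Set.Icc 0 T) := by
    refine monotoneOn_of_deriv_nonneg (convex_Icc 0 T)
      (fun t ht => (h t ht.1 ht.2).continuousAt.continuousWithinAt) ?_ ?_
    · intro t ht
      have ht := interior_subset ht
      exact (h t ht.1 ht.2).differentiableAt.differentiableWithinAt
    · intro t ht
      have ht := interior_subset ht
      rw [(h t ht.1 ht.2).deriv]
      exact h0 t ht.1 ht.2
  exact hm ⟨le_rfl, hT⟩ ⟨hT, le_rfl⟩ hT

theorem le_of_hasDerivAt_two_nonneg {u u' u'' : ℝ → ℝ}
    (h : ∀ t, 0 ≤ t → t ≤ 1 → HasDerivAt u (u' t) t)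
    (h' : ∀ t, 0 ≤ t → t ≤ 1 → HasDerivAt u' (u'' t) t)
    (h0 : 0 ≤ u' 0) (h2 : ∀ t, 0 ≤ t → t ≤ 1 → 0 ≤ u'' t) : u 0 ≤ u 1 := by
  refine le_of_hasDerivAt_nonneg zero_le_one h fun t ht ht1 => h0.trans ?_
  exact le_of_hasDerivAt_nonneg ht (fun s hs hs1 => h' s hs (hs1.trans ht1))
    fun s hs hs1 => h2 s hs (hs1.trans ht1)

/-- A one-dimensional function with `φ' 0 = 0` and `φ'' t ≥ r² / (1 + M r t)` grows at least as
fast as `t ↦ (4 / M²) ω(M r t / 2)`, whose second derivative is `r² / (1 + M r t / 2)²`. -/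
theorem omegaFn_growth {φ φ' φ'' : ℝ → ℝ} {M r : ℝ} (hM : 0 < M) (hr : 0 ≤ r)
    (h : ∀ t, HasDerivAt φ (φ' t) t) (h' : ∀ t, HasDerivAt φ' (φ'' t) t)
    (h0 : φ' 0 = 0)
    (h2 : ∀ t, 0 ≤ t → t ≤ 1 → r ^ 2 ≤ (1 + M * (t * r)) * φ'' t) :
    4 / M ^ 2 * omegaFn (M * r / 2) ≤ φ 1 - φ 0 := by
  have key := le_of_hasDerivAt_two_nonneg
    (u := fun t => φ t - 4 / M ^ 2 * (M * r / 2 * t - Real.log (1 + M * r / 2 * t)))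
    (u' := fun t => φ' t - 4 / M ^ 2 * (M * r / 2 - (M * r / 2) / (1 + M * r / 2 * t)))
    (u'' := fun t => φ'' t - r ^ 2 / (1 + M * r / 2 * t) ^ 2)
    ?_ ?_ ?_ ?_
  · simp only [mul_zero, mul_one, add_zero, Real.log_one, sub_zero] at key
    unfold omegaFn
    linarith
  · intro t ht _
    have hp : 0 < 1 + M * r / 2 * t := by positivity
    have hl : HasDerivAt (fun t : ℝ => M * r / 2 * t) (M * r / 2) t := by
      simpa using (hasDerivAt_id t).const_mul (M * r / 2)
    exact (h t).sub ((hl.sub ((hl.const_add 1).log hp.ne')).const_mul _)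
  · intro t ht _
    have hp : 0 < 1 + M * r / 2 * t := by positivity
    have hl : HasDerivAt (fun t : ℝ => M * r / 2 * t) (M * r / 2) t := by
      simpa using (hasDerivAt_id t).const_mul (M * r / 2)
    have hd := ((hasDerivAt_const t (M * r / 2)).div (hl.const_add 1) hp.ne')
    have hd2 := (h' t).sub ((hd.const_sub (M * r / 2)).const_mul (4 / M ^ 2))
    refine hd2.congr_deriv ?_
    field_simp
    ring
  · simp [h0]
  · intro t ht ht1
    have hp : 0 < 1 + M * (t * r) := by positivity
    have hp2 : 0 < 1 + M * r / 2 * t := by positivity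
    have h3 := h2 t ht ht1
    have hφ : 0 ≤ φ'' t := by
      by_contra! hneg
      nlinarith [sq_nonneg r, mul_pos hp (neg_pos.2 hneg)]
    rw [sub_nonneg, div_le_iff₀ (by positivity)]
    refine h3.trans ?_
    rw [mul_comm]
    refine mul_le_mul_of_nonneg_left ?_ hφ
    nlinarith [sq_nonneg (M * r / 2 * t)]

theorem descent_bound {φ φ' φ'' : ℝ → ℝ} {K : ℝ}
    (h : ∀ t, HasDerivAt φ (φ' t) t) (h' : ∀ t, HasDerivAt φ' (φ'' t) t)
    (h2 : ∀ t, 0 ≤ t → t ≤ 1 → φ'' t ≤ K) :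
    φ 1 ≤ φ 0 + φ' 0 + K / 2 := by
  have key := le_of_hasDerivAt_two_nonneg
    (u := fun t => φ' 0 * t + K / 2 * t ^ 2 - φ t)
    (u' := fun t => φ' 0 + K * t - φ' t) (u'' := fun t => K - φ'' t) ?_ ?_ ?_ ?_
  · norm_num at key
    linarith
  · intro t _ _
    have h1 := (((hasDerivAt_id t).const_mul (φ' 0)).add
      (((hasDerivAt_id t).pow 2).const_mul (K / 2))).sub (h t)
    refine h1.congr_deriv ?_
    simp
    ring
  · intro t _ _
    have h1 := (((hasDerivAt_id t).const_mul K).const_add (φ' 0)).sub (h' t)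
    refine h1.congr_deriv ?_
    simp
  · simp
  · intro t ht ht1
    linarith [h2 t ht ht1]

section Line

variable {d : ℕ} {f : (Fin d → ℝ) → ℝ} {grad : (Fin d → ℝ) → (Fin d → ℝ)}
  {hess : (Fin d → ℝ) → Matrix (Fin d) (Fin d) ℝ}

theorem hasDerivAt_line (a v : Fin d → ℝ) (t : ℝ) :
    HasDerivAt (fun t : ℝ => a + t • v) v t := by
  simpa using ((hasDerivAt_id t).smul_const v).const_add a

theorem hasDerivAt_f_line (hf : ContDiff ℝ 2 f)
    (hgrad : ∀ x v, fderiv ℝ f x v = grad x ⬝ᵥ v) (a v : Fin d → ℝ) (t : ℝ) :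
    HasDerivAt (fun t : ℝ => f (a + t • v)) (grad (a + t • v) ⬝ᵥ v) t := by
  rw [← hgrad]
  exact ((hf.differentiable (by norm_num)) (a + t • v)).hasFDerivAt.comp_hasDerivAt t
    (hasDerivAt_line a v t)

theorem differentiable_grad (hf : ContDiff ℝ 2 f)
    (hgrad : ∀ x v, fderiv ℝ f x v = grad x ⬝ᵥ v) : Differentiable ℝ grad := by
  rw [differentiable_pi]
  intro i
  have h1 : (fun x => grad x i) = fun x => fderiv ℝ f x (Pi.single i 1) := by
    funext x
    rw [hgrad]
    simp
  rw [h1]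
  have h2 : ContDiff ℝ 1 (fderiv ℝ f) := hf.fderiv_right (by norm_num)
  exact (h2.differentiable (by norm_num)).clm_apply (differentiable_const _)

theorem hasDerivAt_grad_line (hf : ContDiff ℝ 2 f)
    (hgrad : ∀ x v, fderiv ℝ f x v = grad x ⬝ᵥ v)
    (hhess : ∀ x v, fderiv ℝ grad x v = hess x *ᵥ v) (a v w : Fin d → ℝ) (t : ℝ) :
    HasDerivAt (fun t : ℝ => grad (a + t • v) ⬝ᵥ w) (w ⬝ᵥ (hess (a + t • v) *ᵥ v)) t := by
  have h1 : HasDerivAt (fun t : ℝ => grad (a + t • v)) (hess (a + t • v) *ᵥ v) t := by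
    rw [← hhess]
    exact (differentiable_grad hf hgrad (a + t • v)).hasFDerivAt.comp_hasDerivAt t
      (hasDerivAt_line a v t)
  rw [hasDerivAt_pi] at h1
  rw [dotProduct_comm]
  exact HasDerivAt.fun_sum fun i _ => (h1 i).mul_const (w i)

theorem ssc_quad {M : ℝ} (hssc : StronglySelfConcordant hess M) (x y z v : Fin d → ℝ) :
    v ⬝ᵥ (hess x *ᵥ v) ≤
      (1 + M * √((x - y) ⬝ᵥ (hess z *ᵥ (x - y)))) * (v ⬝ᵥ (hess y *ᵥ v)) := by
  have h := (hssc x y z).dotProduct_mulVec_nonneg v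
  simp only [star_trivial, Matrix.sub_mulVec, Matrix.smul_mulVec, dotProduct_sub,
    dotProduct_smul, smul_eq_mul] at h
  linarith

theorem quad_smul (A : Matrix (Fin d) (Fin d) ℝ) (t : ℝ) (v : Fin d → ℝ) :
    (t • v) ⬝ᵥ (A *ᵥ (t • v)) = t ^ 2 * (v ⬝ᵥ (A *ᵥ v)) := by
  simp only [Matrix.mulVec_smul, dotProduct_smul, smul_dotProduct, smul_eq_mul]
  ring

theorem sqrt_quad_smul (A : Matrix (Fin d) (Fin d) ℝ) {t : ℝ} (ht : 0 ≤ t) (v : Fin d → ℝ) :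
    √((t • v) ⬝ᵥ (A *ᵥ (t • v))) = t * √(v ⬝ᵥ (A *ᵥ v)) := by
  rw [quad_smul, Real.sqrt_mul (by positivity), Real.sqrt_sq ht]

/-- Cauchy–Schwarz for a positive semidefinite form that is bounded by `c p²` at `e` and by `c q²`
at `v`. -/
theorem neg_bilin_le {A : Matrix (Fin d) (Fin d) ℝ} (hA : A.PosSemidef) {e v : Fin d → ℝ}
    {c p q : ℝ} (hp : 0 < p) (hq : 0 < q)
    (he : e ⬝ᵥ (A *ᵥ e) ≤ c * p ^ 2) (hv : v ⬝ᵥ (A *ᵥ v) ≤ c * q ^ 2) :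
    -(v ⬝ᵥ (A *ᵥ e)) ≤ c * p * q := by
  have hsymm : e ⬝ᵥ (A *ᵥ v) = v ⬝ᵥ (A *ᵥ e) := by
    have hT : Aᵀ = A := by simpa using hA.isHermitian.eq
    rw [dotProduct_mulVec, ← mulVec_transpose, hT, dotProduct_comm]
  have h := hA.dotProduct_mulVec_nonneg (q • e + p • v)
  simp only [star_trivial, mulVec_add, mulVec_smul, dotProduct_add, add_dotProduct,
    dotProduct_smul, smul_dotProduct, smul_eq_mul, hsymm] at h
  have hpq : 0 < p * q := mul_pos hp hq
  refine le_of_mul_le_mul_left ?_ hpq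
  nlinarith [mul_le_mul_of_nonneg_left he (sq_nonneg q),
    mul_le_mul_of_nonneg_left hv (sq_nonneg p)]

/-- The gap `f y - f x_*` controls the distance of `y` to the minimizer in the local norm at
`x_*`. -/
theorem omegaFn_le_gap (hf : ContDiff ℝ 2 f)
    (hgrad : ∀ x v, fderiv ℝ f x v = grad x ⬝ᵥ v)
    (hhess : ∀ x v, fderiv ℝ grad x v = hess x *ᵥ v)
    (hpd : ∀ x, (hess x).PosDef) {M : ℝ} (hM : 0 < M) (hssc : StronglySelfConcordant hess M)
    {xstar : Fin d → ℝ} (hg0 : grad xstar = 0) (e : Fin d → ℝ) :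
    4 / M ^ 2 * omegaFn (M * √(e ⬝ᵥ (hess xstar *ᵥ e)) / 2) ≤ f (xstar + e) - f xstar := by
  have h := omegaFn_growth (r := √(e ⬝ᵥ (hess xstar *ᵥ e))) hM (Real.sqrt_nonneg _)
    (hasDerivAt_f_line hf hgrad xstar e) (hasDerivAt_grad_line hf hgrad hhess xstar e e)
    (by simp [hg0]) ?_
  · simpa using h
  · intro t ht _
    have hnn : 0 ≤ e ⬝ᵥ (hess xstar *ᵥ e) := by
      simpa using (hpd xstar).posSemidef.dotProduct_mulVec_nonneg e
    rw [Real.sq_sqrt hnn]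
    have h1 := ssc_quad hssc xstar (xstar + t • e) xstar e
    have h2 : xstar - (xstar + t • e) = -(t • e) := by abel
    rw [h2, mulVec_neg, dotProduct_neg, neg_dotProduct, neg_neg, sqrt_quad_smul _ ht] at h1
    exact h1

end Line

set_option maxHeartbeats 2000000 in
/-- Admissibility of the unit step size (Lemma 1). -/
theorem bfgs_unit_step_size {d : ℕ}
    (f : (Fin d → ℝ) → ℝ)
    (grad : (Fin d → ℝ) → (Fin d → ℝ))
    (hess : (Fin d → ℝ) → Matrix (Fin d) (Fin d) ℝ)
    (hf : ContDiff ℝ 2 f)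
    (hgrad : ∀ x v, fderiv ℝ f x v = grad x ⬝ᵥ v)
    (hhess : ∀ x v, fderiv ℝ grad x v = hess x *ᵥ v)
    (hpd : ∀ x, (hess x).PosDef)
    (M : ℝ) (hM : 0 < M)
    (hssc : StronglySelfConcordant hess M)
    (xstar : Fin d → ℝ) (hmin : ∀ y, f xstar ≤ f y)
    (α β : ℝ) (hα0 : 0 < α) (hα : α < 1/2) (hαβ : α < β) (hβ : β < 1)
    (δ₁ δ₂ δ₃ : ℝ)
    (hδ₁ : δ₁ = min (1/16) (min ((4 / M ^ 2) * omegaFn (1/32))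
      (min ((4 / M ^ 2) * omegaFn ((Real.sqrt (2 * (1 - α)) - 1) / 2))
        ((4 / M ^ 2) * omegaFn ((1/2) * (1 / Real.sqrt (1 - β) - 1))))))
    (hδ₂ : δ₂ = max (15/16) (1 / Real.sqrt (2 * (1 - α))))
    (hδ₃ : δ₃ = 1 / Real.sqrt (1 - β))
    (x : Fin d → ℝ) (C : ℝ) (hCdef : C = f x - f xstar)
    (B : Matrix (Fin d) (Fin d) ℝ) (hBsymm : B.IsSymm) (hBpd : B.PosDef)
    (dvec : Fin d → ℝ) (hdvec : dvec = -(B⁻¹ *ᵥ grad x))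
    (ρ : ℝ) (hρdef : ρ = (-(grad x ⬝ᵥ dvec)) / (dvec ⬝ᵥ (hess xstar *ᵥ dvec)))
    (hCle : C ≤ δ₁) (hρlo : δ₂ ≤ ρ) (hρhi : ρ ≤ δ₃) :
    (0 < δ₁ ∧ δ₁ < δ₂ ∧ δ₂ < 1 ∧ 1 < δ₃) ∧
    f (x + dvec) ≤ f x + α * (grad x ⬝ᵥ dvec) ∧
    grad (x + dvec) ⬝ᵥ dvec ≥ β * (grad x ⬝ᵥ dvec) := by
  have hnn : ∀ y v, 0 ≤ v ⬝ᵥ (hess y *ᵥ v) := fun y v => by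
    simpa using (hpd y).posSemidef.dotProduct_mulVec_nonneg v
  have hg0 : grad xstar = 0 := by
    have h1 : fderiv ℝ f xstar = 0 :=
      IsLocalMin.fderiv_eq_zero (Filter.Eventually.of_forall hmin)
    refine dotProduct_eq_zero _ fun v => ?_
    rw [← hgrad, h1]
    rfl
  set a := √(2 * (1 - α)) with ha
  set b := √(1 - β) with hb
  have ha1 : 1 < a := by
    rw [ha, Real.lt_sqrt zero_le_one]
    linarith
  have ha2 : a ^ 2 = 2 * (1 - α) := Real.sq_sqrt (by linarith)
  have hb0 : 0 < b := Real.sqrt_pos.2 (by linarith)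
  have hb2 : b ^ 2 = 1 - β := Real.sq_sqrt (by linarith)
  have hb1 : b < 1 := by nlinarith
  have hb3 : 1 < 1 / b := by rwa [lt_div_iff₀ hb0, one_mul]
  have h4M : 0 < 4 / M ^ 2 := by positivity
  refine ⟨⟨?_, ?_, ?_, ?_⟩, ?_⟩
  · rw [hδ₁]
    refine lt_min (by norm_num) (lt_min ?_ (lt_min ?_ ?_)) <;>
      exact mul_pos h4M (omegaFn_pos (by linarith))
  · rw [hδ₁, hδ₂]
    exact (min_le_left _ _).trans_lt (lt_of_lt_of_le (by norm_num) (le_max_left _ _))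
  · rw [hδ₂]
    refine max_lt (by norm_num) ?_
    rw [div_lt_one (by linarith)]
    exact ha1
  · rw [hδ₃]
    exact hb3
  have hρ1 : 15 / 16 ≤ ρ := le_trans (by rw [hδ₂]; exact le_max_left _ _) hρlo
  have hρ2 : 1 / a ≤ ρ := le_trans (by rw [hδ₂]; exact le_max_right _ _) hρlo
  have hρ3 : ρ ≤ 1 / b := by rwa [hδ₃] at hρhi
  set N : (Fin d → ℝ) → ℝ := fun v => √(v ⬝ᵥ (hess xstar *ᵥ v)) with hN
  have hN0 : ∀ v, 0 ≤ N v := fun v => Real.sqrt_nonneg _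
  have hN2 : ∀ v, N v ^ 2 = v ⬝ᵥ (hess xstar *ᵥ v) := fun v => Real.sq_sqrt (hnn xstar v)
  have hclose : ∀ y, f y ≤ f x →
      M * N (y - xstar) ≤ 1 / 16 ∧ 1 + M * N (y - xstar) ≤ a ∧
        1 + M * N (y - xstar) ≤ 1 / b := by
    intro y hy
    have h1 := omegaFn_le_gap hf hgrad hhess hpd hM hssc hg0 (y - xstar)
    rw [add_sub_cancel] at h1
    have h2 : 4 / M ^ 2 * omegaFn (M * N (y - xstar) / 2) ≤ δ₁ := by linarith
    rw [hδ₁, le_min_iff, le_min_iff, le_min_iff] at h2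
    obtain ⟨_, h3, h4, h5⟩ := h2
    have h3 := le_of_omegaFn_le (by norm_num) (le_of_mul_le_mul_left h3 h4M)
    have h4 := le_of_omegaFn_le (by linarith) (le_of_mul_le_mul_left h4 h4M)
    have h5 := le_of_omegaFn_le (by linarith) (le_of_mul_le_mul_left h5 h4M)
    exact ⟨by linarith, by linarith, by linarith⟩
  have hup : ∀ y v, v ⬝ᵥ (hess y *ᵥ v) ≤ (1 + M * N (y - xstar)) * N v ^ 2 := fun y v => by
    rw [hN2]
    exact ssc_quad hssc y xstar xstar v
  have hlow : ∀ y v, N v ^ 2 ≤ (1 + M * N (y - xstar)) * (v ⬝ᵥ (hess y *ᵥ v)) := fun y v => by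
    have h1 := ssc_quad hssc xstar y xstar v
    rw [← neg_sub y xstar, mulVec_neg, dotProduct_neg, neg_dotProduct, neg_neg] at h1
    rw [hN2]
    exact h1
  set D := N dvec with hD
  -- `D = 0` would make `ρ` the junk value `0`.
  have hDpos : 0 < D := by
    refine lt_of_le_of_ne (hN0 _) fun h0 => ?_
    have h1 : dvec ⬝ᵥ (hess xstar *ᵥ dvec) = 0 := by
      rw [← hN2, ← hD, ← h0]
      norm_num
    rw [h1, div_zero] at hρdef
    linarith
  have hgd : grad x ⬝ᵥ dvec = -(ρ * D ^ 2) := by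
    rw [hρdef, hD, hN2, div_mul_cancel₀, neg_neg]
    rw [← hN2, ← hD]
    positivity
  obtain ⟨hs, -, -⟩ := hclose x le_rfl
  set e := x - xstar with he
  have hNt : ∀ t : ℝ, 0 ≤ t → ∀ v, N (t • v) = t * N v := fun t ht v => sqrt_quad_smul _ ht v
  have hDr : D ≤ 17 / 15 * N e := by
    have hmv := le_of_hasDerivAt_nonneg zero_le_one
      (u := fun t : ℝ => 17 / 16 * N e * D * t + grad (xstar + t • e) ⬝ᵥ dvec)
      (u' := fun t : ℝ => 17 / 16 * N e * D + dvec ⬝ᵥ (hess (xstar + t • e) *ᵥ e)) ?_ ?_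
    · have h1 : xstar + e = x := by rw [he]; abel
      simp only [mul_zero, zero_smul, add_zero, hg0, zero_dotProduct, mul_one, one_smul, h1,
        hgd] at hmv
      have h2 : ρ * D ≤ 17 / 16 * N e := by
        refine le_of_mul_le_mul_right ?_ hDpos
        nlinarith
      nlinarith
    · intro t _ _
      have h1 := ((hasDerivAt_id t).const_mul (17 / 16 * N e * D)).add
        (hasDerivAt_grad_line hf hgrad hhess xstar e dvec t)
      rw [mul_one] at h1
      exact h1
    · intro t ht ht1
      rcases (hN0 e).eq_or_lt with h0 | hpos
      · have h1 : e = 0 := by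
          by_contra hne
          have h2 := (hpd xstar).dotProduct_mulVec_pos hne
          rw [star_trivial, ← hN2, ← h0] at h2
          norm_num at h2
        rw [← h0, h1]
        simp
      · have h1 : 1 + M * N (xstar + t • e - xstar) ≤ 17 / 16 := by
          rw [add_sub_cancel_left, hNt t ht]
          nlinarith [mul_nonneg hM.le (hN0 e)]
        have h2 : ∀ v, v ⬝ᵥ (hess (xstar + t • e) *ᵥ v) ≤ 17 / 16 * N v ^ 2 := fun v =>
          (hup _ v).trans (mul_le_mul_of_nonneg_right h1 (sq_nonneg _))
        have h3 := neg_bilin_le (hpd (xstar + t • e)).posSemidef hpos hDpos (h2 e) (h2 dvec)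
        linarith
  have hMD : M * D ≤ 17 / 240 := by nlinarith
  have hseg : ∀ t : ℝ, 0 ≤ t → t ≤ 1 → f (x + t • dvec) ≤ f x := by
    intro t ht ht1
    have h1 := descent_bound (K := 5 / 4 * (t * D) ^ 2)
      (hasDerivAt_f_line hf hgrad x (t • dvec))
      (hasDerivAt_grad_line hf hgrad hhess x (t • dvec) (t • dvec)) ?_
    · simp only [one_smul, zero_smul, add_zero, dotProduct_smul, smul_eq_mul, hgd] at h1
      have h2 : 5 / 4 * (t * D) ^ 2 / 2 ≤ t * (ρ * D ^ 2) := by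
        have h3 : 0 ≤ t * D ^ 2 := by positivity
        linarith [mul_le_mul_of_nonneg_left ht1 h3, mul_le_mul_of_nonneg_left hρ1 h3]
      linarith
    · intro s hs0 hs1
      have h2 := ssc_quad hssc (x + s • t • dvec) x xstar (t • dvec)
      have h3 : √((x + s • t • dvec - x) ⬝ᵥ (hess xstar *ᵥ (x + s • t • dvec - x)))
          = s * (t * D) := by
        rw [add_sub_cancel_left]
        exact (hNt s hs0 _).trans (by rw [hNt t ht])
      rw [h3] at h2
      have h4 := hup x (t • dvec)
      rw [hNt t ht] at h4
      have hst : s * t ≤ 1 := mul_le_one₀ hs1 ht ht1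
      have h5 : 1 + M * (s * (t * D)) ≤ 257 / 240 := by
        nlinarith [mul_le_mul_of_nonneg_left hst (mul_pos hM hDpos).le]
      calc _ ≤ _ := h2
        _ ≤ 257 / 240 * ((1 + M * N e) * (t * D) ^ 2) :=
          mul_le_mul h5 h4 (hnn _ _) (by norm_num)
        _ ≤ 257 / 240 * (17 / 16 * (t * D) ^ 2) := by
          refine mul_le_mul_of_nonneg_left ?_ (by norm_num)
          exact mul_le_mul_of_nonneg_right (by linarith) (sq_nonneg _)
        _ ≤ 5 / 4 * (t * D) ^ 2 := by nlinarith [sq_nonneg (t * D)]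
  constructor
  · have h1 := descent_bound (K := a * D ^ 2) (hasDerivAt_f_line hf hgrad x dvec)
      (hasDerivAt_grad_line hf hgrad hhess x dvec dvec) ?_
    · simp only [one_smul, zero_smul, add_zero, hgd] at h1
      rw [hgd]
      rw [div_le_iff₀ (by linarith)] at hρ2
      -- `(1 - α) ρ = a² ρ / 2 ≥ a / 2`
      have h2 : a ≤ 2 * (1 - α) * ρ := by
        rw [← ha2]
        nlinarith
      nlinarith [mul_le_mul_of_nonneg_right h2 (sq_nonneg D)]
    · intro t ht ht1
      exact (hup _ dvec).trans
        (mul_le_mul_of_nonneg_right (hclose _ (hseg t ht ht1)).2.1 (sq_nonneg _))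
  · have h1 := le_of_hasDerivAt_nonneg zero_le_one
      (u := fun t : ℝ => grad (x + t • dvec) ⬝ᵥ dvec - b * D ^ 2 * t)
      (u' := fun t : ℝ => dvec ⬝ᵥ (hess (x + t • dvec) *ᵥ dvec) - b * D ^ 2) ?_ ?_
    · simp only [one_smul, zero_smul, add_zero, mul_zero, mul_one, sub_zero, hgd] at h1
      rw [hgd]
      rw [le_div_iff₀ hb0] at hρ3
      -- `(1 - β) ρ = b² ρ ≤ b`
      have h2 : (1 - β) * ρ ≤ b := by
        rw [← hb2]
        nlinarith
      nlinarith [mul_le_mul_of_nonneg_right h2 (sq_nonneg D)]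
    · intro t _ _
      have h1 := (hasDerivAt_grad_line hf hgrad hhess x dvec dvec t).sub
        ((hasDerivAt_id t).const_mul (b * D ^ 2))
      rw [mul_one] at h1
      exact h1
    · intro t ht ht1
      have h1 := hlow (x + t • dvec) dvec
      have h2 := h1.trans
        (mul_le_mul_of_nonneg_right (hclose _ (hseg t ht ht1)).2.2 (hnn _ _))
      rw [one_div_mul_eq_div, le_div_iff₀ hb0] at h2
      linarith
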